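/- arXiv:2402.08962 — 2 statements merged into one kernel-verified Lean document; each statement's English description precedes it below -/
import Mathlib

section
/- Let A be the ring of integers of a global field (either a number field or a global function field). Let G be a finite subgroup of GL_n(A) acting linearly on R = A[X_1,...,X_n] (fixing A). For each prime p dividing |G| choose a Sylow p-subgroup H_p of G. If R^{H_p} is Cohen-Macaulay for all primes p dividing |G|, then R^G is Cohen-Macaulay. -/
/-- A Noetherian local ring is Cohen–Macaulay if it admits a regular sequence, consisting of
elements of the maximal ideal, whose length equals the Krull dimension of the ring. -/
def IsCohenMacaulayLocalRing (R : Type*) [CommRing R] [IsLocalRing R] : Prop :=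
  ∃ (n : ℕ) (rs : List R), ringKrullDim R = n ∧ rs.length = n ∧
    (∀ x ∈ rs, x ∈ IsLocalRing.maximalIdeal R) ∧ RingTheory.Sequence.IsRegular R rs

/-- A Noetherian ring is Cohen–Macaulay if all its localizations at prime ideals are
Cohen–Macaulay local rings. -/
def IsCohenMacaulayRing (R : Type*) [CommRing R] : Prop :=
  IsNoetherianRing R ∧
    ∀ (P : Ideal R) (_ : P.IsPrime), IsCohenMacaulayLocalRing (Localization.AtPrime P)

/-- The ring of invariants `R^G` of a subgroup `G ⊆ GL_n(A)` acting linearly on the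
polynomial ring `R = A[X_1, …, X_n]` (fixing `A`), via the standard action of `GL_n(A)`
on the `A`-span of `X_1, …, X_n`. -/
noncomputable def glInvariants {A : Type*} [CommRing A] {n : ℕ}
    (G : Subgroup (Matrix.GeneralLinearGroup (Fin n) A)) :
    Subalgebra A (MvPolynomial (Fin n) A) where
  carrier := {f | ∀ g ∈ G,
    MvPolynomial.aeval
      (fun i => ∑ j, ((g : Matrix (Fin n) (Fin n) A) i j) • MvPolynomial.X j) f = f}
  mul_mem' := by
    intro a b ha hb g hg
    rw [map_mul, ha g hg, hb g hg]
  add_mem' := by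
    intro a b ha hb g hg
    rw [map_add, ha g hg, hb g hg]
  algebraMap_mem' := fun a g _ => MvPolynomial.aeval_C _ a

/-- Witness that `A` is (isomorphic to) the ring of integers of a number field. -/
structure NumberRingOfIntegersData (A : Type*) [CommRing A] where
  K : Type
  [fieldK : Field K]
  numberField : NumberField K
  equiv : A ≃+* NumberField.RingOfIntegers K

/-- Witness that `A` is (isomorphic to) the ring of integers of a global function field,
i.e. the integral closure of `F_q[t]` in a finite extension of `F_q(t)`. -/
structure FunctionRingOfIntegersData (A : Type*) [CommRing A] where
  Fq : Type
  K : Type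
  [fieldFq : Field Fq]
  [finiteFq : Finite Fq]
  [fieldK : Field K]
  [algP : Algebra (Polynomial Fq) K]
  [algR : Algebra (RatFunc Fq) K]
  [tower : IsScalarTower (Polynomial Fq) (RatFunc Fq) K]
  functionField : FunctionField Fq K
  equiv : A ≃+* ↥(FunctionField.ringOfIntegers Fq K)

/-- `A` is the ring of integers of a global field (a number field or a global function
field). -/
def IsRingOfIntegersOfGlobalField (A : Type*) [CommRing A] : Prop :=
  Nonempty (NumberRingOfIntegersData A) ∨ Nonempty (FunctionRingOfIntegersData A)

/-!
Let `P` be a prime of `R^G`, and let `p` be its residue characteristic if this divides `|G|`, and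
any prime divisor of `|G|` otherwise. Then the index of `H_p` in `G` lies outside `P`, so that after
localizing at `P` the relative trace `R^{H_p} → R^G` is, up to a unit, a retraction of the
inclusion. By going down, the extension of `P` to the Cohen–Macaulay ring `R^{H_p}` has height at
least `ht P`, so prime avoidance finds `ht P` elements of `P` forming an `R^{H_p}`-regular sequence.
Regularity descends along the retraction, which makes `(R^G)_P` Cohen–Macaulay.
-/

section Depth

open RingTheory.Sequence CategoryTheory Abelian
open scoped Pointwise

universe v u

variable {B : Type u} [CommRing B] [Small.{v} B]

theorem subsingleton_ext_quotSMulTop (N M : ModuleCat.{v} B) {x : B} (hx : IsSMulRegular M x)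
    {i : ℕ} (hi : Subsingleton (Ext N M i)) (hi' : Subsingleton (Ext N M (i + 1))) :
    Subsingleton (Ext N (ModuleCat.of B (QuotSMulTop x M)) i) := by
  have source_zero := AddCommGrpCat.isZero_of_iff_subsingleton.mpr hi
  have target_zero := AddCommGrpCat.isZero_of_iff_subsingleton.mpr hi'
  exact AddCommGrpCat.subsingleton_of_isZero <| ShortComplex.Exact.isZero_of_both_zeros
    (Ext.covariant_sequence_exact₃' N hx.smulShortComplex_shortExact i (i + 1) rfl)
    (source_zero.eq_zero_of_src _) (target_zero.eq_zero_of_tgt _)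

theorem subsingleton_linearMap_quotient_ofList (N : ModuleCat.{v} B) (rs : List B) :
    ∀ M : ModuleCat.{v} B, IsWeaklyRegular M rs →
      (∀ i ≤ rs.length, Subsingleton (Ext N M i)) →
      Subsingleton (N →ₗ[B] M ⧸ (Ideal.ofList rs • ⊤ : Submodule B M)) := by
  induction rs with
  | nil =>
    intro M _ hext
    have : Subsingleton (N ⟶ M) := Ext.addEquiv₀.subsingleton_congr.mp (hext 0 le_rfl)
    have : Subsingleton (N →ₗ[B] M) := ModuleCat.homAddEquiv.symm.subsingleton
    let quotientEquiv := Submodule.quotEquivOfEqBot (Ideal.ofList ([] : List B) • ⊤) (M := M)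
      (by rw [Ideal.ofList_nil, Submodule.bot_smul])
    exact (LinearEquiv.congrRight (M := N) quotientEquiv).toEquiv.subsingleton
  | cons r rs ih =>
    intro M hreg hext
    obtain ⟨hr, hrs⟩ := (isWeaklyRegular_cons_iff M r rs).mp hreg
    have hquot := ih (ModuleCat.of B (QuotSMulTop r M)) hrs fun i hi =>
      subsingleton_ext_quotSMulTop N M hr (hext i (Nat.le_succ_of_le hi))
        (hext (i + 1) (Nat.succ_le_succ hi))
    let quotientEquiv := Submodule.quotOfListConsSMulTopEquivQuotSMulTopInner M r rs
    exact (LinearEquiv.congrRight (M := N) quotientEquiv).toEquiv.subsingleton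

/-- By Rees, `Ext^i(B ⧸ Q, M)` vanishes for `i < ys.length`, and dimension shifting along `rs` turns
this into `Hom(B ⧸ Q, M ⧸ (rs) M) = 0`. -/
theorem not_le_of_mem_associatedPrimes_quotient_ofList [IsNoetherianRing B]
    {M : Type v} [AddCommGroup M] [Module B M] [Module.Finite B M] {I : Ideal B}
    (hI : I • (⊤ : Submodule B M) < ⊤) {ys rs : List B} (hys : IsRegular M ys)
    (hmem : ∀ y ∈ ys, y ∈ I) (hrs : IsWeaklyRegular M rs) (hlt : rs.length < ys.length)
    {Q : Ideal B} (hQ : Q ∈ associatedPrimes B (M ⧸ (Ideal.ofList rs • ⊤ : Submodule B M))) :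
    ¬ I ≤ Q := by
  intro hIQ
  obtain ⟨hprime, f, hf⟩ := (isAssociatedPrime_iff_exists_injective_linearMap Q _).mp hQ
  let N := ModuleCat.of B (Shrink.{v} (B ⧸ Q))
  have : Module.Finite B N := Module.Finite.equiv (Shrink.linearEquiv B (B ⧸ Q)).symm
  have hsupp : Module.support B N ⊆ PrimeSpectrum.zeroLocus I := by
    rw [(Shrink.linearEquiv B (B ⧸ Q)).support_eq, Module.support_eq_zeroLocus,
      Ideal.annihilator_quotient]
    exact PrimeSpectrum.zeroLocus_anti_mono hIQ
  have hext := ModuleCat.subsingleton_ext_of_exists_isRegular I N hsupp (ModuleCat.of B M) hI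
    ys hmem hys
  have := subsingleton_linearMap_quotient_ofList N rs (ModuleCat.of B M) hrs fun i hi =>
    hext i (hi.trans_lt hlt)
  have : Nontrivial (B ⧸ Q) := Ideal.Quotient.nontrivial_iff.mpr hprime.ne_top
  have hzero : f ∘ₗ (Shrink.linearEquiv B (B ⧸ Q)).toLinearMap = 0 :=
    Subsingleton.elim (α := N →ₗ[B] _) _ _
  have hf_one : f 1 = f 0 := by
    simpa using LinearMap.congr_fun hzero ((Shrink.linearEquiv B (B ⧸ Q)).symm 1)
  exact one_ne_zero (hf hf_one)

end Depth

section CohenMacaulay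

open RingTheory.Sequence IsLocalRing

theorem IsCohenMacaulayLocalRing.of_ringEquiv {B C : Type*} [CommRing B] [IsLocalRing B]
    [CommRing C] [IsLocalRing C] (hB : IsCohenMacaulayLocalRing B) (e : B ≃+* C) :
    IsCohenMacaulayLocalRing C := by
  obtain ⟨n, rs, hdim, hlen, hmem, hreg⟩ := hB
  refine ⟨n, rs.map e, by rw [← ringKrullDim_eq_of_ringEquiv e, hdim],
    by rw [List.length_map, hlen],
    ?_, (AddEquiv.isRegular_congr (e := e.toAddEquiv) (as := rs) ?_).mp hreg⟩
  · simpa only [List.forall_mem_map, mem_maximalIdeal, mem_nonunits_iff, MulEquiv.isUnit_map]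
      using hmem
  · rw [List.forall₂_map_right_iff, List.forall₂_same]
    exact fun r _ x => map_mul e r x

theorem IsCohenMacaulayRing.of_ringEquiv {B C : Type*} [CommRing B] [CommRing C]
    (hB : IsCohenMacaulayRing B) (e : B ≃+* C) : IsCohenMacaulayRing C :=
  have := hB.1
  ⟨isNoetherianRing_of_ringEquiv B e, fun P _ =>
    (hB.2 (P.comap e) inferInstance).of_ringEquiv (Localization.localRingEquiv _ P e rfl)⟩

theorem isCohenMacaulayLocalRing_localization_of_isWeaklyRegular {R : Type*} [CommRing R]
    (P : Ideal R) [P.IsPrime] {rs : List R} (hmem : ∀ r ∈ rs, r ∈ P)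
    (hreg : IsWeaklyRegular (Localization.AtPrime P)
      (rs.map (algebraMap R (Localization.AtPrime P))))
    (hheight : P.height = rs.length) :
    IsCohenMacaulayLocalRing (Localization.AtPrime P) := by
  have hmem' : ∀ x ∈ rs.map (algebraMap R (Localization.AtPrime P)), x ∈ maximalIdeal _ :=
    List.forall_mem_map.mpr fun r hr =>
      (IsLocalization.AtPrime.to_map_mem_maximal_iff _ P r).mpr (hmem r hr)
  refine ⟨rs.length, _, ?_, List.length_map _, hmem',
    (isRegular_iff_isWeaklyRegular_of_subset_maximalIdeal hmem').mpr hreg⟩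
  rw [IsLocalization.AtPrime.ringKrullDim_eq_height P, hheight, WithBot.coe_natCast]

theorem mem_associatedPrimes_localization_quotient_ofList {R : Type*} [CommRing R]
    (Q : Ideal R) [Q.IsPrime] {rs : List R}
    (hQ : Q ∈ associatedPrimes R (R ⧸ (Ideal.ofList rs • ⊤ : Ideal R))) :
    maximalIdeal (Localization.AtPrime Q) ∈ associatedPrimes (Localization.AtPrime Q)
      (Localization.AtPrime Q ⧸ (Ideal.ofList (rs.map (algebraMap R (Localization.AtPrime Q))) •
        ⊤ : Ideal (Localization.AtPrime Q))) := by
  let f := Algebra.linearMap R (Localization.AtPrime Q)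
  have hass :=
    Module.associatedPrimes.mem_associatedPrimes_of_comap_mem_associatedPrimes_of_isLocalizedModule
      Q.primeCompl (Submodule.toLocalizedQuotient' (Localization.AtPrime Q) Q.primeCompl f _)
      (maximalIdeal (Localization.AtPrime Q))
      (by rwa [← Ideal.under_def, IsLocalization.AtPrime.under_maximalIdeal _ Q])
  rwa [Submodule.localized'_smul, Ideal.localized'_eq_map, Ideal.map_ofList,
    Submodule.localized'_top] at hass

theorem IsCohenMacaulayRing.height_le_length_of_mem_associatedPrimes {T : Type*} [CommRing T]
    (hT : IsCohenMacaulayRing T) {rs : List T} (hrs : IsWeaklyRegular T rs) {Q : Ideal T}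
    (hQ : Q ∈ associatedPrimes T (T ⧸ (Ideal.ofList rs • ⊤ : Ideal T))) :
    Q.height ≤ rs.length := by
  have := hT.1
  have hprime : Q.IsPrime := IsAssociatedPrime.isPrime hQ
  obtain ⟨n, ys, hdim, hlen, hys, hreg⟩ := hT.2 Q hprime
  have hheight : Q.height = n := by
    rw [IsLocalization.AtPrime.ringKrullDim_eq_height Q] at hdim
    exact_mod_cast hdim
  rw [hheight, Nat.cast_le]
  by_contra! hlt
  have hmax_smul : maximalIdeal (Localization.AtPrime Q) •
      (⊤ : Ideal (Localization.AtPrime Q)) < ⊤ := by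
    rw [smul_eq_mul, Ideal.mul_top]
    exact (maximalIdeal.isMaximal _).ne_top.lt_top
  exact not_le_of_mem_associatedPrimes_quotient_ofList hmax_smul hreg hys
    (hrs.of_isLocalization (Localization.AtPrime Q) Q.primeCompl)
    (by rwa [List.length_map, hlen]) (mem_associatedPrimes_localization_quotient_ofList Q hQ) le_rfl

theorem exists_mem_isSMulRegular_of_forall_not_le_associatedPrimes {S T M : Type*} [CommRing S]
    [CommRing T] [IsNoetherianRing T] [Algebra S T] [AddCommGroup M] [Module T M]
    [Module.Finite T M] (I : Ideal S)
    (hI : ∀ Q ∈ associatedPrimes T M, ¬ I ≤ Q.comap (algebraMap S T)) :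
    ∃ x ∈ I, IsSMulRegular M (algebraMap S T x) := by
  by_contra! hzeroDivisors
  have hcover : (I : Set S) ⊆
      ⋃ Q ∈ associatedPrimes T M, (Q.comap (algebraMap S T) : Set S) := by
    intro x hx
    have hmem : algebraMap S T x ∈ {r : T | IsSMulRegular M r}ᶜ := hzeroDivisors x hx
    rw [← biUnion_associatedPrimes_eq_compl_regular] at hmem
    simpa only [Set.mem_iUnion, SetLike.mem_coe, Ideal.mem_comap] using hmem
  obtain ⟨Q, hQ, hle⟩ := (Ideal.subset_union_prime_finite (associatedPrimes.finite T M) ⊥ ⊥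
    fun Q hQ _ _ => (IsAssociatedPrime.isPrime hQ).comap (algebraMap S T)).mp hcover
  exact hI Q hQ hle

/-- The sequence is chosen inside `S`, where `I` lives, by avoiding the contractions of the
associated primes of the successive quotients of `T`. -/
theorem IsCohenMacaulayRing.exists_isWeaklyRegular_of_le_height_map {S T : Type*} [CommRing S]
    [CommRing T] [Algebra S T] (hT : IsCohenMacaulayRing T) (I : Ideal S) (d : ℕ)
    (hd : d ≤ (I.map (algebraMap S T)).height) :
    ∃ rs : List S, rs.length = d ∧ (∀ r ∈ rs, r ∈ I) ∧
      IsWeaklyRegular T (rs.map (algebraMap S T)) := by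
  have := hT.1
  induction d with
  | zero => exact ⟨[], rfl, by simp, IsWeaklyRegular.nil T T⟩
  | succ d ih =>
    have hlt : (d : ℕ∞) < (I.map (algebraMap S T)).height :=
      (Nat.cast_lt.mpr d.lt_succ_self).trans_le hd
    obtain ⟨rs, hlen, hmem, hreg⟩ := ih hlt.le
    obtain ⟨x, hxI, hx⟩ := exists_mem_isSMulRegular_of_forall_not_le_associatedPrimes
      (M := T ⧸ (Ideal.ofList (rs.map (algebraMap S T)) • ⊤ : Ideal T)) I fun Q hQ hle => by
        have hheight := hT.height_le_length_of_mem_associatedPrimes hreg hQ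
        rw [List.length_map, hlen] at hheight
        exact hlt.not_ge ((Ideal.height_mono (Ideal.map_le_iff_le_comap.mpr hle)).trans hheight)
    refine ⟨rs ++ [x], by rw [List.length_append, hlen, List.length_singleton], ?_, ?_⟩
    · simpa only [List.forall_mem_append, List.forall_mem_singleton] using ⟨hmem, hxI⟩
    · rw [List.map_append, List.map_singleton, isWeaklyRegular_append_iff,
        isWeaklyRegular_singleton_iff]
      exact ⟨hreg, hx⟩

end CohenMacaulay

section Descent

open RingTheory.Sequence IsLocalRing

theorem isWeaklyRegular_of_retract {B M N : Type*} [CommRing B] [AddCommGroup M] [Module B M]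
    [AddCommGroup N] [Module B N] (f : M →ₗ[B] N) (g : N →ₗ[B] M)
    (hgf : g ∘ₗ f = LinearMap.id) {rs : List B} (hrs : IsWeaklyRegular N rs) :
    IsWeaklyRegular M rs := by
  refine ⟨fun i hi => ?_⟩
  let I := Ideal.ofList (rs.take i)
  let f_quot := Submodule.mapQ (I • ⊤) (I • ⊤) f (Submodule.smul_top_le_comap_smul_top I f)
  let g_quot := Submodule.mapQ (I • ⊤) (I • ⊤) g (Submodule.smul_top_le_comap_smul_top I g)
  have hretract : Function.LeftInverse g_quot f_quot := by
    refine (Submodule.Quotient.mk_surjective _).forall.mpr fun m => ?_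
    rw [Submodule.mapQ_apply, Submodule.mapQ_apply, ← LinearMap.comp_apply, hgf, LinearMap.id_apply]
  exact (hrs.regular_mod_prev i hi).of_injective f_quot hretract.injective

theorem height_le_height_map_of_hasGoingDown {S T : Type*} [CommRing S] [IsNoetherianRing S]
    [CommRing T] [IsNoetherianRing T] [Algebra S T] [Algebra.HasGoingDown S T] (P : Ideal S) :
    P.height ≤ (P.map (algebraMap S T)).height := by
  rw [Ideal.height_eq_inf_minimalPrimes (I := P.map (algebraMap S T))]
  refine le_iInf₂ fun Q hQ => ?_
  have := hQ.isPrime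
  calc P.height ≤ (Q.under S).height := Ideal.height_mono (Ideal.map_le_iff_le_comap.mp hQ.1.2)
    _ ≤ Q.height := by
      rw [Ideal.height_eq_height_add_of_liesOver_of_hasGoingDown (Q.under S) Q]
      exact le_self_add

theorem exists_retract_atPrime {S T : Type*} [CommRing S] [CommRing T] [Algebra S T]
    (P : Ideal S) [P.IsPrime] (ρ : T →ₗ[S] S) (hρ : ρ 1 ∉ P) :
    ∃ (f : Localization.AtPrime P →ₗ[Localization.AtPrime P] LocalizedModule.AtPrime P T)
      (g : LocalizedModule.AtPrime P T →ₗ[Localization.AtPrime P] Localization.AtPrime P),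
      g ∘ₗ f = LinearMap.id := by
  let unit : (Localization.AtPrime P)ˣ :=
    (IsLocalization.map_units _ (⟨ρ 1, hρ⟩ : P.primeCompl)).unit
  let T_P := LocalizedModule.mkLinearMap P.primeCompl T
  let ρ_P := IsLocalizedModule.mapExtendScalars P.primeCompl T_P
    (Algebra.linearMap S (Localization.AtPrime P)) (Localization.AtPrime P) ρ
  have hρ_P : ρ_P (T_P 1) = unit :=
    IsLocalizedModule.map_apply P.primeCompl T_P (Algebra.linearMap S _) ρ 1
  refine ⟨LinearMap.toSpanSingleton _ _ (T_P 1), (↑unit⁻¹ : Localization.AtPrime P) • ρ_P,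
    LinearMap.ext_ring ?_⟩
  rw [LinearMap.comp_apply, LinearMap.toSpanSingleton_apply_one, LinearMap.smul_apply, hρ_P,
    smul_eq_mul, Units.inv_mul, LinearMap.id_apply]

theorem IsCohenMacaulayRing.isCohenMacaulayLocalRing_localization_of_linearMap {S T : Type*}
    [CommRing S] [IsNoetherianRing S] [CommRing T] [Algebra S T] [Algebra.HasGoingDown S T]
    (hT : IsCohenMacaulayRing T) (P : Ideal S) [P.IsPrime] (ρ : T →ₗ[S] S) (hρ : ρ 1 ∉ P) :
    IsCohenMacaulayLocalRing (Localization.AtPrime P) := by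
  have := hT.1
  obtain ⟨d, hd⟩ := ENat.ne_top_iff_exists.mp (Ideal.height_ne_top_of_isPrime (I := P))
  obtain ⟨rs, hlen, hmem, hreg⟩ := hT.exists_isWeaklyRegular_of_le_height_map P d
    (hd.trans_le (height_le_height_map_of_hasGoingDown P))
  refine isCohenMacaulayLocalRing_localization_of_isWeaklyRegular P hmem ?_ (by rw [← hd, hlen])
  obtain ⟨f, g, hgf⟩ := exists_retract_atPrime P ρ hρ
  exact isWeaklyRegular_of_retract f g hgf <|
    ((isWeaklyRegular_map_algebraMap_iff T T rs).mp hreg).of_isLocalizedModule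
      (Localization.AtPrime P) P.primeCompl (LocalizedModule.mkLinearMap P.primeCompl T)

end Descent

section Polynomial

open RingTheory.Sequence IsLocalRing Polynomial

theorem isSMulRegular_quotient_map_C_of_monic {B : Type*} [CommRing B] (I : Ideal B) {f : B[X]}
    (hf : f.Monic) : IsSMulRegular (B[X] ⧸ I.map (algebraMap B B[X])) f := by
  rw [isSMulRegular_quotient_iff_mem_of_smul_mem]
  intro g hg
  have hker : I.map (algebraMap B B[X]) = RingHom.ker (mapRingHom (Ideal.Quotient.mk I)) := by
    rw [ker_mapRingHom, Ideal.mk_ker, algebraMap_eq]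
  rw [hker, RingHom.mem_ker, coe_mapRingHom] at hg ⊢
  rw [smul_eq_mul, Polynomial.map_mul] at hg
  exact (hf.map _).mul_right_eq_zero_iff.mp hg

theorem IsCohenMacaulayLocalRing.localization_polynomial {B : Type*} [CommRing B] [IsLocalRing B]
    [IsNoetherianRing B] (hB : IsCohenMacaulayLocalRing B) (p : Ideal B[X]) [p.IsPrime]
    (hp : p.comap C = maximalIdeal B) : IsCohenMacaulayLocalRing (Localization.AtPrime p) := by
  obtain ⟨d, rs, hdim, hlen, hrs, hreg⟩ := hB
  let q := (maximalIdeal B).map C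
  have hqp : q ≤ p := Ideal.map_le_iff_le_comap.mpr hp.ge
  have hq_height : q.height = d := by
    rw [height_map_C, ← WithBot.coe_inj, maximalIdeal_height_eq_ringKrullDim, hdim,
      WithBot.coe_natCast]
  have hmem : ∀ r ∈ rs.map (algebraMap B B[X]), r ∈ p :=
    List.forall_mem_map.mpr fun r hr => hqp (Ideal.mem_map_of_mem C (hrs r hr))
  have hreg_poly : IsWeaklyRegular B[X] (rs.map (algebraMap B B[X])) :=
    hreg.toIsWeaklyRegular.of_flat
  by_cases hpq : p = q
  · exact isCohenMacaulayLocalRing_localization_of_isWeaklyRegular p hmem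
      (hreg_poly.of_isLocalization _ p.primeCompl) (by rw [hpq, hq_height, List.length_map, hlen])
  · have hmax : (p.comap C).IsMaximal := hp ▸ maximalIdeal.isMaximal B
    obtain ⟨f, hmonic, hf⟩ := exists_monic_span_sup_map_eq B p hmax (by rwa [hp])
    have hfp : f ∈ p := hf ▸ Ideal.mem_sup_right (Ideal.mem_span_singleton_self f)
    have hp_height : p.height = d + 1 := by
      refine le_antisymm ?_ ?_
      · have hle := Ideal.height_le_ringKrullDim_of_isPrime (I := p)
        rw [ringKrullDim_of_isNoetherianRing, hdim] at hle
        exact_mod_cast hle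
      · rw [← hq_height]
        have : q.IsPrime := Ideal.isPrime_map_C_of_isPrime
        exact Ideal.height_add_one_le_of_lt_of_isPrime (hqp.lt_of_ne' hpq)
    refine isCohenMacaulayLocalRing_localization_of_isWeaklyRegular p
      (rs := rs.map (algebraMap B B[X]) ++ [f]) ?_
      (IsWeaklyRegular.of_isLocalization _ p.primeCompl ?_) ?_
    · rw [List.forall_mem_append, List.forall_mem_singleton]
      exact ⟨hmem, hfp⟩
    · rw [isWeaklyRegular_append_iff, isWeaklyRegular_singleton_iff, ← Ideal.map_ofList,
        smul_eq_mul, Ideal.mul_top]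
      exact ⟨hreg_poly, isSMulRegular_quotient_map_C_of_monic _ hmonic⟩
    · rw [hp_height, List.length_append, List.length_map, hlen, List.length_singleton]
      norm_cast

theorem isCohenMacaulayLocalRing_localization_of_map {R S : Type*} [CommRing R] [CommRing S]
    [Algebra R S] (M : Submonoid R) [IsLocalization M S] (p : Ideal R) [p.IsPrime]
    (hdisj : Disjoint (M : Set R) p) [(p.map (algebraMap R S)).IsPrime]
    (h : IsCohenMacaulayLocalRing (Localization.AtPrime (p.map (algebraMap R S)))) :
    IsCohenMacaulayLocalRing (Localization.AtPrime p) := by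
  let C := Localization.AtPrime (p.map (algebraMap R S))
  have hunder : (p.map (algebraMap R S)).comap (algebraMap R S) = p :=
    IsLocalization.under_map_of_isPrime_disjoint M S ‹_› hdisj
  have hloc : IsLocalization.AtPrime C ((p.map (algebraMap R S)).comap (algebraMap R S)) :=
    IsLocalization.isLocalization_isLocalization_atPrime_isLocalization M C _
  have : IsLocalization p.primeCompl C := by simpa only [hunder] using hloc
  exact h.of_ringEquiv (IsLocalization.algEquiv p.primeCompl C _).toRingEquiv

attribute [local instance] Polynomial.algebra Polynomial.isLocalization in
theorem IsCohenMacaulayRing.polynomial {R : Type*} [CommRing R] (hR : IsCohenMacaulayRing R) :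
    IsCohenMacaulayRing R[X] := by
  have := hR.1
  refine ⟨inferInstance, fun p _ => ?_⟩
  let q := p.under R
  let S := Localization.AtPrime q
  have hdisj : Disjoint (q.primeCompl.map C : Set R[X]) p :=
    Set.disjoint_left.mpr fun _ ⟨b, hb, hba⟩ ha =>
      hb (show algebraMap R R[X] b ∈ p by rwa [algebraMap_eq, hba])
  have : (p.map (algebraMap R[X] S[X])).IsPrime :=
    IsLocalization.isPrime_of_isPrime_disjoint (q.primeCompl.map C) _ _ ‹_› hdisj
  have : (p.map (algebraMap R[X] S[X])).LiesOver (q.map (algebraMap R S)) :=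
    IsLocalization.liesOver_of_isPrime_of_disjoint q.primeCompl _ _ hdisj
  have hover : (p.map (algebraMap R[X] S[X])).comap C = maximalIdeal S := by
    rw [← Localization.AtPrime.map_eq_maximalIdeal]
    exact (Ideal.over_def _ _).symm
  have : IsNoetherianRing S := IsLocalization.isNoetherianRing q.primeCompl S inferInstance
  exact isCohenMacaulayLocalRing_localization_of_map (q.primeCompl.map C) p hdisj
    ((hR.2 q inferInstance).localization_polynomial _ hover)

theorem IsCohenMacaulayRing.mvPolynomial {R : Type*} [CommRing R] (hR : IsCohenMacaulayRing R)
    (σ : Type*) [Finite σ] : IsCohenMacaulayRing (MvPolynomial σ R) := by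
  induction σ using Finite.induction_empty_option with
  | of_equiv e hα => exact hα.of_ringEquiv (MvPolynomial.renameEquiv R e).toRingEquiv
  | h_empty => exact hR.of_ringEquiv (MvPolynomial.isEmptyRingEquiv R _).symm
  | h_option hα =>
    exact hα.polynomial.of_ringEquiv (MvPolynomial.optionEquivLeft R _).symm.toRingEquiv

end Polynomial

section Dedekind

open RingTheory.Sequence IsLocalRing

theorem isCohenMacaulayRing_of_isDedekindDomain (R : Type*) [CommRing R] [IsDedekindDomain R] :
    IsCohenMacaulayRing R := by
  refine ⟨inferInstance, fun P _ => ?_⟩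
  rcases eq_or_ne P ⊥ with rfl | hP
  · exact isCohenMacaulayLocalRing_localization_of_isWeaklyRegular ⊥ (rs := []) (by simp)
      (IsWeaklyRegular.nil _ _) (by rw [Ideal.height_bot, List.length_nil, Nat.cast_zero])
  · obtain ⟨x, hx, hx_ne⟩ := P.ne_bot_iff.mp hP
    refine isCohenMacaulayLocalRing_localization_of_isWeaklyRegular P (rs := [x])
      (by rwa [List.forall_mem_singleton])
      (IsWeaklyRegular.of_isLocalization _ P.primeCompl ?_) ?_
    · rw [isWeaklyRegular_singleton_iff]
      exact IsSMulRegular.of_ne_zero hx_ne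
    · have : IsDiscreteValuationRing (Localization.AtPrime P) :=
        IsLocalization.AtPrime.isDiscreteValuationRing_of_dedekind_domain R hP _
      have hdim : ringKrullDim (Localization.AtPrime P) = 1 :=
        IsPrincipalIdealRing.ringKrullDim_eq_one _ (IsDiscreteValuationRing.not_isField _)
      rw [IsLocalization.AtPrime.ringKrullDim_eq_height P] at hdim
      exact_mod_cast hdim

end Dedekind

section Invariants

open scoped Pointwise

instance isInvariant_fixedPoints {A R Γ : Type*} [CommRing A] [CommRing R] [Algebra A R]
    [Group Γ] [MulSemiringAction Γ R] [SMulCommClass Γ A R] :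
    Algebra.IsInvariant (FixedPoints.subalgebra A R Γ) R Γ :=
  ⟨fun f hf => ⟨⟨f, hf⟩, rfl⟩⟩

theorem hasGoingDown_of_isInvariant (S T R Γ : Type*) [CommRing S] [CommRing T] [CommRing R]
    [Algebra S T] [Algebra T R] [Algebra S R] [IsScalarTower S T R] [FaithfulSMul S R]
    [FaithfulSMul T R] [Group Γ] [Finite Γ] [MulSemiringAction Γ R] [SMulCommClass Γ S R]
    [Algebra.IsInvariant S R Γ] : Algebra.HasGoingDown S T := by
  have := Algebra.IsInvariant.isIntegral S R Γ
  have : Algebra.IsIntegral T R := .tower_top S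
  refine ⟨fun {p} _ Q _ hlt => ?_⟩
  obtain ⟨Q', -, _, hQ'⟩ := Ideal.exists_ideal_over_prime_of_isIntegral (S := R) Q ⊥
    (by simp [Ideal.comap_bot_of_injective _ (FaithfulSMul.algebraMap_injective T R)])
  obtain ⟨p', -, _, hp'⟩ := Ideal.exists_ideal_over_prime_of_isIntegral (S := R) p ⊥
    (by simp [Ideal.comap_bot_of_injective _ (FaithfulSMul.algebraMap_injective S R)])
  obtain ⟨q', hp'q', _, hq'⟩ := Ideal.exists_ideal_over_prime_of_isIntegral_of_isPrime
    (Q.under S) p' (hp'.trans_le hlt.le)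
  have hQ'_under : Q'.under S = Q.under S := by
    rw [← Ideal.under_under (B := T) Q', ← hQ', Ideal.under_def T Q']
  obtain ⟨g, rfl⟩ := Algebra.IsInvariant.exists_smul_of_under_eq S R Γ q' Q'
    (hq'.trans hQ'_under.symm)
  have : p'.LiesOver p := ⟨hp'.symm⟩
  have hlies : (g • p').LiesOver p := inferInstance
  refine ⟨(g • p').under T, hQ' ▸ Ideal.comap_mono (Ideal.map_mono hp'q'), inferInstance, ⟨?_⟩⟩
  rw [Ideal.under_under]
  exact hlies.over

theorem isNoetherianRing_of_isInvariant (A S R Γ : Type*) [CommRing A] [IsNoetherianRing A]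
    [CommRing S] [CommRing R] [Algebra A S] [Algebra A R] [Algebra S R] [IsScalarTower A S R]
    [FaithfulSMul S R] [Algebra.FiniteType A R] [Group Γ] [Finite Γ] [MulSemiringAction Γ R]
    [Algebra.IsInvariant S R Γ] : IsNoetherianRing S := by
  have := Algebra.IsInvariant.isIntegral S R Γ
  have : Algebra.FiniteType S R := .of_restrictScalars_finiteType A S R
  have : Module.Finite S R := Algebra.IsIntegral.finite
  have : Algebra.FiniteType A S := ⟨fg_of_fg_of_fg A S R Algebra.FiniteType.out
    Module.Finite.fg_top (FaithfulSMul.algebraMap_injective S R)⟩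
  exact Algebra.FiniteType.isNoetherianRing A S

section RelativeTrace

variable (S : Type*) {R Γ : Type*} [CommSemiring S] [Semiring R] [Algebra S R] [Group Γ]
  [MulSemiringAction Γ R] [SMulCommClass Γ S R] (H : Subgroup Γ)

variable {H} in
theorem out_mk_smul_of_mem_fixedPoints {t : R} (ht : t ∈ FixedPoints.subalgebra S R H) (g : Γ) :
    (g : Γ ⧸ H).out • t = g • t := by
  obtain ⟨h, hh⟩ := QuotientGroup.mk_out_eq_mul H g
  rw [hh, mul_smul]
  exact congrArg (g • ·) (ht h)

variable [Fintype (Γ ⧸ H)]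

theorem sum_out_smul_mem_fixedPoints (t : FixedPoints.subalgebra S R H) :
    ∑ q : Γ ⧸ H, q.out • (t : R) ∈ FixedPoints.subalgebra S R Γ := by
  intro g
  rw [Finset.smul_sum]
  refine Fintype.sum_equiv (MulAction.toPerm g) _ _ fun q => ?_
  induction q using QuotientGroup.induction_on with
  | H a =>
    rw [MulAction.toPerm_apply, MulAction.Quotient.smul_coe, smul_eq_mul,
      out_mk_smul_of_mem_fixedPoints S t.2, out_mk_smul_of_mem_fixedPoints S t.2, mul_smul]

/-- The relative trace `R^H → R^Γ`, sending `t` to the sum of its translates `g • t` over the left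
cosets `gH`; any choice of coset representatives gives the same map. -/
noncomputable def relativeTrace :
    FixedPoints.subalgebra S R H →ₗ[S] FixedPoints.subalgebra S R Γ where
  toFun t := ⟨∑ q : Γ ⧸ H, q.out • (t : R), sum_out_smul_mem_fixedPoints S H t⟩
  map_add' t t' := Subtype.ext <| by
    simp only [AddMemClass.coe_add, smul_add, Finset.sum_add_distrib]
  map_smul' s t := Subtype.ext <| by
    simp only [SetLike.val_smul, smul_comm _ s, Finset.smul_sum, RingHom.id_apply]

theorem relativeTrace_one : relativeTrace S H (R := R) 1 = H.index := by
  refine Subtype.ext ?_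
  change ∑ q : Γ ⧸ H, q.out • (1 : R) = _
  simp only [smul_one, Finset.sum_const, Finset.card_univ, nsmul_eq_mul, mul_one,
    Subgroup.index_eq_card, Nat.card_eq_fintype_card]
  rfl

end RelativeTrace

theorem exists_linearMap_fixedPoints_apply_one (S : Type*) {R Γ : Type*} [CommSemiring S]
    [Semiring R] [Algebra S R] [Group Γ] [MulSemiringAction Γ R] [SMulCommClass Γ S R]
    (H : Subgroup Γ) [H.FiniteIndex] [FaithfulSMul S R] [Algebra.IsInvariant S R Γ] :
    ∃ ρ : FixedPoints.subalgebra S R H →ₗ[S] S, ρ 1 = H.index := by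
  let := H.fintypeQuotientOfFiniteIndex
  let e : S ≃ₗ[S] FixedPoints.subalgebra S R Γ :=
    LinearEquiv.ofBijective (Algebra.linearMap S _)
      ⟨fun x y hxy => FaithfulSMul.algebraMap_injective S R (congrArg Subtype.val hxy),
        fun f => (Algebra.IsInvariant.isInvariant (f : R) f.2).imp fun _ h => Subtype.ext h⟩
  refine ⟨e.symm.toLinearMap ∘ₗ relativeTrace S H, ?_⟩
  rw [LinearMap.comp_apply, relativeTrace_one, LinearEquiv.coe_coe, LinearEquiv.symm_apply_eq]
  exact (map_natCast (algebraMap S _) _).symm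

theorem isCohenMacaulayLocalRing_localization_of_index_notMem {S R Γ : Type*} [CommRing S]
    [IsNoetherianRing S] [CommRing R] [Algebra S R] [FaithfulSMul S R] [Group Γ] [Finite Γ]
    [MulSemiringAction Γ R] [SMulCommClass Γ S R] [Algebra.IsInvariant S R Γ] {H : Subgroup Γ}
    (hH : IsCohenMacaulayRing (FixedPoints.subalgebra S R H)) (P : Ideal S) [P.IsPrime]
    (hP : (H.index : S) ∉ P) : IsCohenMacaulayLocalRing (Localization.AtPrime P) := by
  have := hasGoingDown_of_isInvariant S (FixedPoints.subalgebra S R H) R Γ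
  obtain ⟨ρ, hρ⟩ := exists_linearMap_fixedPoints_apply_one S H (R := R)
  exact hH.isCohenMacaulayLocalRing_localization_of_linearMap P ρ (hρ ▸ hP)

theorem exists_prime_dvd_forall_natCast_notMem {S : Type*} [CommRing S] (P : Ideal S) [P.IsPrime]
    {n : ℕ} (hn : n ≠ 1) :
    ∃ p : ℕ, p.Prime ∧ p ∣ n ∧ ∀ m : ℕ, m ∣ n → ¬ p ∣ m → (m : S) ∉ P := by
  obtain ⟨c, _⟩ := CharP.exists (S ⧸ P)
  have hmem (m : ℕ) : (m : S) ∈ P ↔ c ∣ m := by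
    rw [← CharP.cast_eq_zero_iff (S ⧸ P), ← map_natCast (Ideal.Quotient.mk P),
      Ideal.Quotient.eq_zero_iff_mem]
  simp only [hmem]
  by_cases hc : c.Prime ∧ c ∣ n
  · exact ⟨c, hc.1, hc.2, fun _ _ => id⟩
  · obtain ⟨p, hp, hpn⟩ := Nat.exists_prime_and_dvd hn
    refine ⟨p, hp, hpn, fun m hmn hpm hcm => ?_⟩
    have hc_zero : c = 0 := (CharP.char_is_prime_or_zero (S ⧸ P) c).resolve_left fun hc_prime =>
      hc ⟨hc_prime, hcm.trans hmn⟩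
    rw [hc_zero, zero_dvd_iff] at hcm
    exact hpm (hcm ▸ dvd_zero p)

theorem IsCohenMacaulayRing.of_sylow {S R Γ : Type*} [CommRing S] [IsNoetherianRing S]
    [CommRing R] [Algebra S R] [FaithfulSMul S R] [Group Γ] [Finite Γ] [MulSemiringAction Γ R]
    [SMulCommClass Γ S R] [Algebra.IsInvariant S R Γ] (hR : IsCohenMacaulayRing R)
    (Hp : ∀ p : ℕ, p.Prime → p ∣ Nat.card Γ → Sylow p Γ)
    (hHp : ∀ p hp hdvd, IsCohenMacaulayRing (FixedPoints.subalgebra S R (Hp p hp hdvd))) :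
    IsCohenMacaulayRing S := by
  by_cases hcard : Nat.card Γ = 1
  · have := (Nat.card_eq_one_iff_unique.mp hcard).1
    have hsurj : Function.Surjective (algebraMap S R) := fun r =>
      Algebra.IsInvariant.isInvariant (G := Γ) r fun g => by rw [Subsingleton.elim g 1, one_smul]
    exact hR.of_ringEquiv
      (RingEquiv.ofBijective _ ⟨FaithfulSMul.algebraMap_injective S R, hsurj⟩).symm
  · refine ⟨inferInstance, fun P _ => ?_⟩
    obtain ⟨p, hp, hdvd, hP⟩ := exists_prime_dvd_forall_natCast_notMem P hcard
    have := Fact.mk hp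
    exact isCohenMacaulayLocalRing_localization_of_index_notMem (hHp p hp hdvd) P
      (hP _ (Subgroup.index_dvd_card _) (Hp p hp hdvd).not_dvd_index)

end Invariants

section LinearAction

open MvPolynomial
open Matrix hiding mul_inv_rev

variable {ι A : Type*} [Fintype ι] [DecidableEq ι] [CommRing A] {n : ℕ}

/-- The action of `GL_n(A)` on `A[X_1, …, X_n]` by linear substitutions. Substituting the rows of a
matrix for the variables is a right action, so `g` acts by the substitution attached to `g⁻¹`; this
does not change the invariants of a subgroup. -/
noncomputable instance glMulSemiringAction :
    MulSemiringAction (GeneralLinearGroup ι A) (MvPolynomial ι A) where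
  smul g := bind₁ (g⁻¹).val.toMvPolynomial
  one_smul f := by
    change bind₁ (1⁻¹ : GeneralLinearGroup ι A).val.toMvPolynomial f = f
    rw [inv_one, Units.val_one, toMvPolynomial_one, bind₁_X_left, AlgHom.id_apply]
  mul_smul g h f := by
    change bind₁ ((g * h)⁻¹).val.toMvPolynomial f =
      bind₁ (g⁻¹).val.toMvPolynomial (bind₁ (h⁻¹).val.toMvPolynomial f)
    rw [bind₁_bind₁, mul_inv_rev, Units.val_mul,
      ← funext (toMvPolynomial_mul (h⁻¹).val (g⁻¹).val)]
  smul_zero g := map_zero (bind₁ _)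
  smul_add g := map_add (bind₁ _)
  smul_one g := map_one (bind₁ _)
  smul_mul g := map_mul (bind₁ _)

theorem gl_smul_def (g : GeneralLinearGroup ι A) (f : MvPolynomial ι A) :
    g • f = bind₁ (g⁻¹).val.toMvPolynomial f :=
  rfl

instance smulCommClass_gl :
    SMulCommClass (GeneralLinearGroup ι A) A (MvPolynomial ι A) :=
  ⟨fun g => map_smul (bind₁ (g⁻¹).val.toMvPolynomial)⟩

theorem mem_glInvariants_iff (G : Subgroup (GeneralLinearGroup (Fin n) A))
    (f : MvPolynomial (Fin n) A) : f ∈ glInvariants G ↔ ∀ g ∈ G, g • f = f := by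
  have haeval (g : GeneralLinearGroup (Fin n) A) :
      aeval (fun i => ∑ j, g.val i j • X j) f = g⁻¹ • f := by
    have hrows : (fun i => ∑ j, g.val i j • X j) = g.val.toMvPolynomial := by
      funext i
      simp only [toMvPolynomial, ← C_mul_X_eq_monomial, smul_eq_C_mul]
    rw [gl_smul_def, inv_inv, hrows, aeval_eq_bind₁]
  change (∀ g ∈ G, aeval (fun i => ∑ j, g.val i j • X j) f = f) ↔ _
  simp only [haeval]
  exact ⟨fun h g hg => inv_inv g ▸ h _ (inv_mem hg), fun h g hg => h _ (inv_mem hg)⟩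

theorem glInvariants_eq_fixedPoints (G : Subgroup (GeneralLinearGroup (Fin n) A)) :
    glInvariants G = FixedPoints.subalgebra A (MvPolynomial (Fin n) A) G := by
  ext f
  rw [mem_glInvariants_iff]
  exact ⟨fun h g => h g g.2, fun h g hg => h ⟨g, hg⟩⟩

theorem glInvariants_map_subtype_eq_fixedPoints (G : Subgroup (GeneralLinearGroup (Fin n) A))
    (H : Subgroup G) :
    glInvariants (H.map G.subtype) = FixedPoints.subalgebra A (MvPolynomial (Fin n) A) H := by
  ext f
  simp only [mem_glInvariants_iff, Subgroup.mem_map, forall_exists_index, and_imp,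
    forall_apply_eq_imp_iff₂]
  exact ⟨fun h g => h g g.2, fun h g hg => h ⟨g, hg⟩⟩

end LinearAction

section IntegralClosure

open Polynomial

theorem isNoetherianRing_of_injective_of_finite_comp {P B D : Type*} [CommRing P]
    [IsNoetherianRing P] [CommRing B] [CommRing D] (f : P →+* B) {g : B →+* D}
    (hg : Function.Injective g) (hgf : (g.comp f).Finite) : IsNoetherianRing B := by
  algebraize [f, g, g.comp f]
  exact isNoetherianRing_iff.mpr <| isNoetherian_of_tower P <|
    isNoetherian_of_injective (IsScalarTower.toAlgHom P B D).toLinearMap hg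

theorem finite_iterateFrobenius {P : Type*} [CommRing P] (p : ℕ) [ExpChar P p]
    (hP : (frobenius P p).Finite) (m : ℕ) : (iterateFrobenius P p m).Finite := by
  induction m with
  | zero => rw [iterateFrobenius_zero]; exact .id P
  | succ m ih => rw [iterateFrobenius_add, iterateFrobenius_one]; exact ih.comp hP

theorem finite_frobenius_of_finiteType_int {P : Type*} [CommRing P]
    (hP : (Int.castRingHom P).FiniteType) (p : ℕ) [ExpChar P p] : (frobenius P p).Finite := by
  refine RingHom.IsIntegral.to_finite (fun x => ?_) ?_
  · exact ⟨X ^ p - C x, monic_X_pow_sub_C x (expChar_ne_zero P p), by simp [frobenius_def]⟩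
  · refine RingHom.FiniteType.of_comp_finiteType (f := Int.castRingHom P) ?_
    rwa [RingHom.ext_int ((frobenius P p).comp (Int.castRingHom P)) (Int.castRingHom P)]

/-- A power of Frobenius maps `K` into the separable closure `L` of `F` in `K`, hence the integral
closure of `P` in `K` into the one in `L`, which is finite over `P`. -/
theorem isNoetherianRing_integralClosure_of_finite_frobenius (P F K : Type*) [CommRing P]
    [IsNoetherianRing P] [IsIntegrallyClosed P] [Field F] [Algebra P F]
    [IsFractionRing P F] [Field K] [Algebra F K] [FiniteDimensional F K] [Algebra P K]
    [IsScalarTower P F K] (p : ℕ) [ExpChar P p] (hP : (frobenius P p).Finite) :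
    IsNoetherianRing (integralClosure P K) := by
  let L := separableClosure F K
  have : IsDomain P := (IsFractionRing.injective P F).isDomain
  have : ExpChar F p := expChar_of_injective_algebraMap (IsFractionRing.injective P F) p
  have : ExpChar L p := expChar_of_injective_algebraMap (algebraMap F L).injective p
  have : ExpChar K p := expChar_of_injective_algebraMap (algebraMap F K).injective p
  have : IsScalarTower P L K := .of_algebraMap_eq fun _ => rfl
  have : IsNoetherian P (integralClosure P L) := IsIntegralClosure.isNoetherian P F L _
  let m := IsPurelyInseparable.exponent L K
  let φ : K →+* L := IsPurelyInseparable.iterateFrobenius L K p (n := m) le_rfl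
  have hφ (x : K) : algebraMap L K (φ x) = x ^ p ^ m :=
    IsPurelyInseparable.algebraMap_iterateFrobenius L p le_rfl x
  have hφ_integral (x : integralClosure P K) : φ x ∈ integralClosure P L := by
    have hpow : IsIntegral P (algebraMap L K (φ x)) := hφ x ▸ IsIntegral.pow x.2 _
    exact (isIntegral_algHom_iff (IsScalarTower.toAlgHom P L K) (algebraMap L K).injective).mp hpow
  let g : integralClosure P K →+* integralClosure P L :=
    (φ.comp (integralClosure P K).val.toRingHom).codRestrict _ hφ_integral
  have hg_comp : g.comp (algebraMap P (integralClosure P K)) =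
      (algebraMap P (integralClosure P L)).comp (iterateFrobenius P p m) := by
    refine RingHom.ext fun a => Subtype.ext ((algebraMap L K).injective ?_)
    change algebraMap L K (φ (algebraMap P K a)) =
      algebraMap L K (algebraMap P L (iterateFrobenius P p m a))
    rw [hφ, ← IsScalarTower.algebraMap_apply, iterateFrobenius_def, map_pow]
  refine isNoetherianRing_of_injective_of_finite_comp (algebraMap P (integralClosure P K)) (g := g)
    (fun x y hxy => Subtype.ext (φ.injective (congrArg Subtype.val hxy))) ?_
  rw [hg_comp]
  exact (RingHom.finite_algebraMap.mpr inferInstance).comp (finite_iterateFrobenius p hP m)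

theorem isDedekindDomain_functionField_ringOfIntegers (F K : Type*) [Field F] [Finite F] [Field K]
    [Algebra F[X] K] [Algebra (RatFunc F) K] [IsScalarTower F[X] (RatFunc F) K]
    [FunctionField F K] : IsDedekindDomain (FunctionField.ringOfIntegers F K) := by
  obtain ⟨p, _⟩ := ExpChar.exists F
  have : ExpChar F[X] p := expChar_of_injective_algebraMap (R := F) C_injective p
  have hF : (Int.castRingHom F).FiniteType := RingHom.finiteType_algebraMap.mpr inferInstance
  have hFX : (Int.castRingHom F[X]).FiniteType := by
    rw [RingHom.ext_int (Int.castRingHom F[X]) (C.comp (Int.castRingHom F))]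
    exact .comp (RingHom.finiteType_algebraMap.mpr inferInstance) hF
  have : IsNoetherianRing (FunctionField.ringOfIntegers F K) :=
    isNoetherianRing_integralClosure_of_finite_frobenius F[X] (RatFunc F) K p
      (finite_frobenius_of_finiteType_int hFX p)
  have : Ring.DimensionLEOne (FunctionField.ringOfIntegers F K) :=
    Ring.DimensionLEOne.integralClosure F[X] K
  exact { }

theorem IsRingOfIntegersOfGlobalField.isCohenMacaulayRing {A : Type*} [CommRing A]
    (hA : IsRingOfIntegersOfGlobalField A) : IsCohenMacaulayRing A := by
  rcases hA with ⟨K, _, e⟩ | ⟨Fq, K, _, e⟩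
  · exact (isCohenMacaulayRing_of_isDedekindDomain _).of_ringEquiv e.symm
  · have := isDedekindDomain_functionField_ringOfIntegers Fq K
    exact (isCohenMacaulayRing_of_isDedekindDomain _).of_ringEquiv e.symm

end IntegralClosure

theorem sylow_reduction_invariants_cohenMacaulay_general
    {A : Type*} [CommRing A] (hA : IsCohenMacaulayRing A)
    (n : ℕ) (G : Subgroup (Matrix.GeneralLinearGroup (Fin n) A)) [Finite G]
    (Hp : ∀ p : ℕ, p.Prime → p ∣ Nat.card G → Sylow p G)
    (hCM : ∀ (p : ℕ) (hp : p.Prime) (hdvd : p ∣ Nat.card G),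
      IsCohenMacaulayRing (glInvariants ((Hp p hp hdvd : Subgroup G).map G.subtype))) :
    IsCohenMacaulayRing (glInvariants G) := by
  have := hA.1
  let S := FixedPoints.subalgebra A (MvPolynomial (Fin n) A) G
  have : IsNoetherianRing S :=
    isNoetherianRing_of_isInvariant A S (MvPolynomial (Fin n) A) G
  rw [glInvariants_eq_fixedPoints]
  refine IsCohenMacaulayRing.of_sylow (hA.mvPolynomial (Fin n)) Hp fun p hp hdvd => ?_
  have hHp := hCM p hp hdvd
  rw [glInvariants_map_subtype_eq_fixedPoints] at hHp
  exact hHp.of_ringEquiv (RingEquiv.refl _)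

/-- Let `A` be the ring of integers of a global field and let `G ⊆ GL_n(A)` be a finite
group acting linearly on `R = A[X_1, …, X_n]` (fixing `A`). For each prime `p` dividing
`|G|` choose a Sylow `p`-subgroup `H_p` of `G`. If `R^{H_p}` is Cohen–Macaulay for all
primes `p` dividing `|G|`, then `R^G` is Cohen–Macaulay. -/
theorem sylow_reduction_invariants_cohenMacaulay
    (A : Type) [CommRing A] (hA : IsRingOfIntegersOfGlobalField A)
    (n : ℕ) (G : Subgroup (Matrix.GeneralLinearGroup (Fin n) A)) [Finite ↥G]
    (Hp : ∀ (p : ℕ), p.Prime → p ∣ Nat.card ↥G → Sylow p ↥G)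
    (hCM : ∀ (p : ℕ) (hp : p.Prime) (hdvd : p ∣ Nat.card ↥G),
      IsCohenMacaulayRing
        ↥(glInvariants ((Hp p hp hdvd : Subgroup ↥G).map G.subtype))) :
    IsCohenMacaulayRing ↥(glInvariants G) :=
  sylow_reduction_invariants_cohenMacaulay_general hA.isCohenMacaulayRing n G Hp hCM
end

section
/- Let A ⊆ B be rings of integers of global fields such that B is a finitely generated A-module. Let G be a finite subgroup of GL_n(A), regarded also as a subgroup of GL_n(B) via the inclusion GL_n(A) ⊆ GL_n(B). Let G act linearly on R = A[X_1,...,X_n] and on T = B[X_1,...,X_n]. Then R^G is Cohen-Macaulay if and only if T^G is Cohen-Macaulay. -/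
/-!
Invariants and the Cohen–Macaulay property both behave well along a finite faithfully flat map.

* When `B` is projective over `A`, invariants commute with base change, `B ⊗ A[X]^G ≃ B[X]^G`: an
  element of `B ⊗ A[X]` lies in `B ⊗ A[X]^G` as soon as all its images under functionals `B → A` are
  invariant. Projectivity is automatic once `A` is Noetherian, as it is if either ring of invariants
  is.
* The Cohen–Macaulay property ascends and descends along a finite faithfully flat map `C → D`. The
  closed fibres of the local maps `C_P → D_Q` are zero-dimensional, so dimensions agree. Regular
  sequences of `C_P` remain regular in `D_Q`; conversely, if `D_Q` has a regular element then so
  has `C_P`, and dividing by it lowers both depths by one.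

A ring of integers `A` is integrally closed and integral over a principal ideal domain, so by an
argument of Kaplansky its localizations at primes are valuation rings, whence torsion-free
`A`-modules are flat.
-/

section Depth

open CategoryTheory Abelian IsLocalRing RingTheory.Sequence

universe u v

/-- The module `M` over the local ring `R` has depth at least `n`: it admits a regular sequence of
length `n` in the maximal ideal. -/
def DepthAtLeast (R : Type*) [CommRing R] [IsLocalRing R] (M : Type*) [AddCommGroup M] [Module R M]
    (n : ℕ) : Prop :=
  ∃ rs : List R, rs.length = n ∧ (∀ r ∈ rs, r ∈ maximalIdeal R) ∧ IsRegular M rs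

lemma isCohenMacaulayLocalRing_iff_depthAtLeast {R : Type*} [CommRing R] [IsLocalRing R] :
    IsCohenMacaulayLocalRing R ↔ ∃ n : ℕ, ringKrullDim R = n ∧ DepthAtLeast R R n :=
  exists_congr fun _ => exists_and_left

namespace DepthAtLeast

variable {R : Type u} [CommRing R] [IsLocalRing R] {M : Type v} [AddCommGroup M] [Module R M]
  {n : ℕ}

lemma congr {N : Type*} [AddCommGroup N] [Module R N] (e : M ≃ₗ[R] N) :
    DepthAtLeast R M n ↔ DepthAtLeast R N n := by
  simp only [DepthAtLeast, e.isRegular_congr]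

lemma zero [Nontrivial M] : DepthAtLeast R M 0 :=
  ⟨[], rfl, by simp, IsRegular.nil R M⟩

lemma succ {x : R} (hx : x ∈ maximalIdeal R) (hxM : IsSMulRegular M x)
    (h : DepthAtLeast R (QuotSMulTop x M) n) : DepthAtLeast R M (n + 1) := by
  obtain ⟨rs, hlen, hrs, hreg⟩ := h
  exact ⟨x :: rs, by simp [hlen], List.forall_mem_cons.mpr ⟨hx, hrs⟩, hreg.cons hxM⟩

lemma exists_isSMulRegular (h : DepthAtLeast R M (n + 1)) :
    ∃ x ∈ maximalIdeal R, IsSMulRegular M x := by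
  obtain ⟨_ | ⟨x, rs⟩, hlen, hrs, hreg⟩ := h
  · simp at hlen
  · exact ⟨x, hrs x List.mem_cons_self, ((isRegular_cons_iff M x rs).mp hreg).1⟩

variable [IsNoetherianRing R] [Small.{v} R] [Module.Finite R M] [Nontrivial M]

variable (R M n) in
lemma iff_subsingleton_ext : DepthAtLeast R M n ↔ ∀ i < n, Subsingleton
    (Ext (ModuleCat.of R (Shrink.{v} (R ⧸ maximalIdeal R))) (ModuleCat.of R M) i) :=
  have smul_top_lt : maximalIdeal R • (⊤ : Submodule R M) < ⊤ :=
    (Submodule.top_ne_ideal_smul_of_le_jacobson_annihilator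
      (maximalIdeal_le_jacobson _)).symm.lt_top
  (ModuleCat.exists_isRegular_tfae (maximalIdeal R) n (ModuleCat.of R M) smul_top_lt).out 3 1

lemma quotSMulTop (h : DepthAtLeast R M (n + 1)) {x : R} (hx : x ∈ maximalIdeal R)
    (hxM : IsSMulRegular M x) : DepthAtLeast R (QuotSMulTop x M) n := by
  have := nontrivial_quotSMulTop_of_mem_maximalIdeal M hx
  rw [iff_subsingleton_ext] at h ⊢
  intro i hi
  have hM : ∀ j < n + 1, Limits.IsZero (AddCommGrpCat.of
      (Ext (ModuleCat.of R (Shrink.{v} (R ⧸ maximalIdeal R))) (ModuleCat.of R M) j)) :=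
    fun j hj => AddCommGrpCat.isZero_of_iff_subsingleton.mpr (h j hj)
  exact AddCommGrpCat.subsingleton_of_isZero <| ShortComplex.Exact.isZero_of_both_zeros
    (Ext.covariant_sequence_exact₃' _
      (IsSMulRegular.smulShortComplex_shortExact (M := ModuleCat.of R M) hxM) i (i + 1) rfl)
    ((hM i (by lia)).eq_zero_of_src _) ((hM (i + 1) (by lia)).eq_zero_of_tgt _)

end DepthAtLeast

open TensorProduct

variable {C : Type u} [CommRing C] [IsLocalRing C] {D : Type v} [CommRing D] [IsLocalRing D]
  [Algebra C D]

lemma DepthAtLeast.tensorProduct [Module.FaithfullyFlat C D]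
    {M : Type*} [AddCommGroup M] [Module C M] {n : ℕ} (h : DepthAtLeast C M n) :
    DepthAtLeast D (D ⊗[C] M) n := by
  obtain ⟨rs, hlen, hrs, hreg⟩ := h
  refine ⟨rs.map (algebraMap C D), by simpa using hlen, ?_,
    hreg.of_faithfullyFlat_of_isBaseChange (TensorProduct.isBaseChange C M D)⟩
  rintro _ hx
  obtain ⟨y, hy, rfl⟩ := List.mem_map.mp hx
  exact map_nonunit (algebraMap C D) y (hrs y hy)

lemma exists_mem_maximalIdeal_isSMulRegular_of_tensorProduct [IsNoetherianRing C]
    [Module.FaithfullyFlat C D]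
    (hfib : maximalIdeal D ≤ ((maximalIdeal C).map (algebraMap C D)).radical)
    {M : Type*} [AddCommGroup M] [Module C M] [Module.Finite C M] {r : D}
    (hr : r ∈ maximalIdeal D) (hreg : IsSMulRegular (D ⊗[C] M) r) :
    ∃ x ∈ maximalIdeal C, IsSMulRegular M x := by
  obtain ⟨k, hk⟩ := hfib hr
  have eq_zero {m : M} (hm : ∀ c ∈ maximalIdeal C, c • m = 0) : m = 0 := by
    have annihilated : (maximalIdeal C).map (algebraMap C D) ≤
        LinearMap.ker (LinearMap.toSpanSingleton D (D ⊗[C] M) (1 ⊗ₜ m)) :=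
      Ideal.map_le_iff_le_comap.mpr fun c hc => by
        simp [← TensorProduct.tmul_smul, hm c hc]
    apply Module.FaithfullyFlat.tensorProduct_mk_injective (A := C) (B := D) M
    rw [map_zero]
    exact (hreg.pow k).right_eq_zero_of_smul (annihilated hk)
  have hom_subsingleton : Subsingleton ((C ⧸ maximalIdeal C) →ₗ[C] M) := by
    refine subsingleton_of_forall_eq 0 fun f => ?_
    ext
    refine eq_zero fun c hc => ?_
    simp [← map_smul, Algebra.smul_def, Ideal.Quotient.eq_zero_iff_mem.mpr hc]
  obtain ⟨x, hx, hxM⟩ := IsSMulRegular.subsingleton_linearMap_iff.mp hom_subsingleton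
  exact ⟨x, by rwa [Ideal.annihilator_quotient] at hx, hxM⟩

lemma DepthAtLeast.of_tensorProduct [IsNoetherianRing C] [IsNoetherianRing D]
    [Module.FaithfullyFlat C D]
    (hfib : maximalIdeal D ≤ ((maximalIdeal C).map (algebraMap C D)).radical)
    {M : Type u} [AddCommGroup M] [Module C M] [Module.Finite C M] [Nontrivial M] {n : ℕ}
    (h : DepthAtLeast D (D ⊗[C] M) n) : DepthAtLeast C M n := by
  induction n generalizing M with
  | zero => exact .zero
  | succ n ih =>
    obtain ⟨r, hr, hrM⟩ := h.exists_isSMulRegular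
    obtain ⟨x, hx, hxM⟩ := exists_mem_maximalIdeal_isSMulRegular_of_tensorProduct hfib hr hrM
    have hxDM : IsSMulRegular (D ⊗[C] M) (algebraMap C D x) :=
      hxM.of_flat_of_isBaseChange (TensorProduct.isBaseChange C M D)
    have := nontrivial_quotSMulTop_of_mem_maximalIdeal M hx
    refine .succ hx hxM (ih ?_)
    exact (DepthAtLeast.congr (QuotSMulTop.algebraMapTensorEquivTensorQuotSMulTop x M D)).mp
      (h.quotSMulTop (map_nonunit _ x hx) hxDM)

lemma ringKrullDim_eq_of_flat [IsNoetherianRing C] [IsNoetherianRing D] [Module.FaithfullyFlat C D]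
    (hfib : maximalIdeal D ≤ ((maximalIdeal C).map (algebraMap C D)).radical) :
    ringKrullDim D = ringKrullDim C := by
  have minimal : maximalIdeal D ∈ ((maximalIdeal C).map (algebraMap C D)).minimalPrimes :=
    ⟨⟨inferInstance, map_maximalIdeal_le _⟩,
      fun _ hJ _ => hfib.trans (hJ.1.radical_le_iff.mpr hJ.2)⟩
  rw [Ideal.minimalPrimes_eq_comap] at minimal
  obtain ⟨q, hq, hqD⟩ := minimal
  have fibre_height : ((maximalIdeal D).map
      (Ideal.Quotient.mk ((maximalIdeal C).map (algebraMap C D)))).height = 0 := by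
    rw [← hqD, Ideal.map_comap_of_surjective _ Ideal.Quotient.mk_surjective]
    have := hq.isPrime
    exact Ideal.height_eq_zero_iff.mpr hq
  rw [← maximalIdeal_height_eq_ringKrullDim, ← maximalIdeal_height_eq_ringKrullDim,
    Ideal.height_eq_height_add_of_liesOver_of_hasGoingDown (maximalIdeal C) (maximalIdeal D),
    fibre_height, add_zero]

lemma isCohenMacaulayLocalRing_iff_of_flat [IsNoetherianRing C] [IsNoetherianRing D]
    [Module.FaithfullyFlat C D]
    (hfib : maximalIdeal D ≤ ((maximalIdeal C).map (algebraMap C D)).radical) :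
    IsCohenMacaulayLocalRing C ↔ IsCohenMacaulayLocalRing D := by
  have depthAtLeast_iff (n : ℕ) : DepthAtLeast C C n ↔ DepthAtLeast D D n :=
    (Iff.intro .tensorProduct (.of_tensorProduct hfib)).trans
      (DepthAtLeast.congr (TensorProduct.AlgebraTensorModule.rid C D D))
  simp only [isCohenMacaulayLocalRing_iff_depthAtLeast, depthAtLeast_iff,
    ringKrullDim_eq_of_flat hfib]

end Depth

section FiniteExtension

variable {C D : Type*} [CommRing C] [CommRing D] [Algebra C D]

lemma maximalIdeal_le_radical_map_of_liesOver [Algebra.IsIntegral C D] (P : Ideal C) [P.IsPrime]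
    (Q : Ideal D) [Q.IsPrime] [Q.LiesOver P] :
    letI := Localization.AtPrime.algebraOfLiesOver P Q
    IsLocalRing.maximalIdeal (Localization.AtPrime Q) ≤
      ((IsLocalRing.maximalIdeal (Localization.AtPrime P)).map
        (algebraMap (Localization.AtPrime P) (Localization.AtPrime Q))).radical := by
  let := Localization.AtPrime.algebraOfLiesOver P Q
  have hQ : Q ∈ (P.map (algebraMap C D)).minimalPrimes := by
    rw [Q.over_def P]
    exact Ideal.IsIntegral.mem_minimalPrimes_map_under Q
  rw [← Localization.AtPrime.map_eq_maximalIdeal, ← Localization.AtPrime.map_eq_maximalIdeal,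
    ← IsLocalization.AtPrime.radical_map_of_mem_minimalPrimes _ Q _ hQ, Ideal.map_map,
    Ideal.map_map, ← IsScalarTower.algebraMap_eq, ← IsScalarTower.algebraMap_eq]

lemma isCohenMacaulayLocalRing_localization_iff [IsNoetherianRing C] [IsNoetherianRing D]
    [Algebra.IsIntegral C D] [Module.Flat C D] (P : Ideal C) [P.IsPrime] (Q : Ideal D) [Q.IsPrime]
    [hPQ : Q.LiesOver P] :
    IsCohenMacaulayLocalRing (Localization.AtPrime P) ↔
      IsCohenMacaulayLocalRing (Localization.AtPrime Q) := by
  let := Localization.AtPrime.algebraOfLiesOver P Q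
  have : IsLocalHom (algebraMap (Localization.AtPrime P) (Localization.AtPrime Q)) :=
    Localization.isLocalHom_localRingHom P Q (algebraMap C D) hPQ.over
  have : Module.FaithfullyFlat (Localization.AtPrime P) (Localization.AtPrime Q) :=
    Module.FaithfullyFlat.of_flat_of_isLocalHom
  exact isCohenMacaulayLocalRing_iff_of_flat (maximalIdeal_le_radical_map_of_liesOver P Q)

variable (C D) in
lemma isNoetherianRing_of_faithfullyFlat [Module.FaithfullyFlat C D] [IsNoetherianRing D] :
    IsNoetherianRing C := by
  have map_strictMono : StrictMono (Ideal.map (algebraMap C D)) :=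
    Monotone.strictMono_of_injective (fun _ _ h => Ideal.map_mono h)
      Ideal.map_injective_of_faithfullyFlat
  rw [isNoetherianRing_iff, isNoetherian_iff']
  exact map_strictMono.wellFoundedGT

variable (C D) in
theorem isCohenMacaulayRing_iff_of_finite_of_faithfullyFlat [Module.Finite C D]
    [Module.FaithfullyFlat C D] : IsCohenMacaulayRing C ↔ IsCohenMacaulayRing D := by
  constructor
  · rintro ⟨_, hC⟩
    refine ⟨IsNoetherianRing.of_finite C D, fun Q _ => ?_⟩
    have := IsNoetherianRing.of_finite C D
    exact (isCohenMacaulayLocalRing_localization_iff (Q.under C) Q).mp (hC _ inferInstance)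
  · rintro ⟨_, hD⟩
    have := isNoetherianRing_of_faithfullyFlat C D
    refine ⟨this, fun P _ => ?_⟩
    obtain ⟨Q, hQ, _⟩ := Ideal.exists_isPrime_liesOver_of_faithfullyFlat (B := D) P
    exact (isCohenMacaulayLocalRing_localization_iff P Q).mpr (hD Q hQ)

end FiniteExtension

lemma isCohenMacaulayRing_iff_of_ringEquiv {R S : Type*} [CommRing R] [CommRing S] (e : R ≃+* S) :
    IsCohenMacaulayRing R ↔ IsCohenMacaulayRing S := by
  let := e.toRingHom.toAlgebra
  let e' : R ≃ₗ[R] S := { e with map_smul' := fun r x => map_mul e r x }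
  have : Module.Finite R S := .equiv e'
  have : Module.FaithfullyFlat R S := .of_linearEquiv _ _ e'.symm
  exact isCohenMacaulayRing_iff_of_finite_of_faithfullyFlat R S

section ValuationRing

open Polynomial

section Kaplansky

variable {V K : Type*} [CommRing V] [Field K] [Algebra V K] {f : V[X]} {x : K}

lemma isInteger_of_aeval_eq_zero_of_isUnit_leadingCoeff [IsIntegrallyClosed V]
    [IsFractionRing V K] (hx : aeval x f = 0) (hf : IsUnit f.leadingCoeff) :
    IsLocalization.IsInteger V x := by
  have integral : IsIntegral V (hf.unit⁻¹ • f.leadingCoeff • x) :=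
    (isIntegral_leadingCoeff_smul f x hx).smul _
  rw [Units.smul_def, smul_smul, IsUnit.val_inv_mul, one_smul] at integral
  exact IsIntegrallyClosed.isIntegral_iff.mp integral

lemma isInteger_inv_of_isUnit_of_smul_eq {a c : V} (hc : IsUnit c)
    (h : algebraMap V K c = a • x) : IsLocalization.IsInteger V x⁻¹ := by
  obtain ⟨u, rfl⟩ := hc
  refine ⟨↑u⁻¹ * a, eq_inv_of_mul_eq_one_left ?_⟩
  rw [map_mul, mul_assoc, ← Algebra.smul_def a, ← h, ← map_mul, Units.inv_mul, map_one]

lemma exists_natDegree_lt_of_aeval_eq_zero [IsLocalRing V] (hx : aeval x f = 0)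
    (hdeg : f.natDegree ≠ 0) (hlead : f.leadingCoeff ∈ nonunits V) {c : V} (hc : c ∈ nonunits V)
    (hcx : algebraMap V K c = f.leadingCoeff • x) (hf : ∃ i, IsUnit (f.coeff i)) :
    ∃ g : V[X], g.natDegree < f.natDegree ∧ aeval x g = 0 ∧ ∃ i, IsUnit (g.coeff i) := by
  obtain ⟨i, hi⟩ := hf
  obtain ⟨m, hm⟩ := Nat.exists_eq_succ_of_ne_zero hdeg
  refine ⟨f.eraseLead + C c * X ^ m, ?_, ?_, i, ?_⟩
  · suffices f.eraseLead.natDegree ≤ m from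
      (natDegree_add_le_of_degree_le this (natDegree_C_mul_X_pow_le c m)).trans_lt (by lia)
    exact f.eraseLead_natDegree_le.trans (by lia)
  · simp [← self_sub_monomial_natDegree_leadingCoeff, hx, hm, pow_succ', ← Algebra.smul_def,
      ← Algebra.smul_mul_assoc, ← hcx]
  · have hi_ne : i ≠ f.natDegree := by
      rintro rfl
      exact hlead hi
    have mem : (C c * X ^ m).coeff i ∈ nonunits V := by
      rw [coeff_C_mul_X_pow]
      split_ifs
      exacts [hc, zero_mem_nonunits.mpr zero_ne_one]
    rw [coeff_add, eraseLead_coeff_of_ne i hi_ne]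
    by_contra h
    exact (Ideal.add_mem_iff_left (IsLocalRing.maximalIdeal V) mem).mp h hi

/-- Kaplansky's argument: as long as neither `a x` nor the leading coefficient `a` is a unit, the
two leading terms `a X ^ (m + 1) + b X ^ m` may be replaced by `(a x + b) X ^ m`. -/
theorem isInteger_or_isInteger_inv_of_aeval_eq_zero [IsLocalRing V]
    [IsIntegrallyClosed V] [IsFractionRing V K] (hx : aeval x f = 0)
    (hf : ∃ i, IsUnit (f.coeff i)) :
    IsLocalization.IsInteger V x ∨ IsLocalization.IsInteger V x⁻¹ := by
  induction hm : f.natDegree using Nat.strong_induction_on generalizing f with | h m ih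
  subst hm
  by_cases hlead : IsUnit f.leadingCoeff
  · exact .inl (isInteger_of_aeval_eq_zero_of_isUnit_leadingCoeff hx hlead)
  obtain ⟨c, hcx⟩ := IsIntegrallyClosed.isIntegral_iff.mp (isIntegral_leadingCoeff_smul f x hx)
  by_cases hc : IsUnit c
  · exact .inr (isInteger_inv_of_isUnit_of_smul_eq hc hcx)
  have hdeg : f.natDegree ≠ 0 := by
    intro h0
    obtain ⟨r, rfl⟩ := natDegree_eq_zero.mp h0
    obtain rfl : r = 0 := by simpa using hx
    obtain ⟨i, hi⟩ := hf
    simp at hi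
  obtain ⟨g, hlt, hg, hgi⟩ := exists_natDegree_lt_of_aeval_eq_zero hx hdeg hlead hc hcx hf
  exact ih _ hlt hg hgi rfl

end Kaplansky

lemma exists_aeval_eq_zero_coeff_notMem {O K : Type*} [CommRing O] [IsDomain O] [IsBezout O]
    [CommRing K] [IsDomain K] [Algebra O K] [FaithfulSMul O K] {x : K} (hx : IsAlgebraic O x)
    {p : Ideal O} (hp : p ≠ ⊤) : ∃ f : O[X], aeval x f = 0 ∧ ∃ i, f.coeff i ∉ p := by
  obtain ⟨_⟩ : Nonempty (NormalizedGCDMonoid O) := inferInstance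
  obtain ⟨f, hf, hfx⟩ := hx
  refine ⟨f.primPart, aeval_primPart_eq_zero hf hfx, ?_⟩
  by_contra! hcoeff
  have contentIdeal_le : f.primPart.contentIdeal ≤ p :=
    Ideal.span_le.mpr fun c hc => by
      obtain ⟨i, -, rfl⟩ := mem_coeffs_iff.mp hc
      exact hcoeff i
  rw [(isPrimitive_iff_contentIdeal_eq_top _).mp f.isPrimitive_primPart] at contentIdeal_le
  exact hp (top_le_iff.mp contentIdeal_le)

theorem valuationRing_localization_of_isIntegral (O : Type*) {A : Type*} [CommRing O] [IsDomain O]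
    [IsBezout O] [CommRing A] [IsDomain A] [IsIntegrallyClosed A] [Algebra O A]
    [FaithfulSMul O A] [Algebra.IsIntegral O A] (P : Ideal A) [P.IsPrime] :
    ValuationRing (Localization.AtPrime P) := by
  have := isIntegrallyClosed_of_isLocalization (Localization.AtPrime P) P.primeCompl
    P.primeCompl_le_nonZeroDivisors
  let K := FractionRing A
  have : Algebra.IsAlgebraic A K := IsLocalization.isAlgebraic K (nonZeroDivisors A)
  have : Algebra.IsAlgebraic O K := .trans O A K
  refine (ValuationRing.iff_isInteger_or_isInteger _ K).mpr fun x => ?_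
  obtain ⟨f, hfx, i, hi⟩ := exists_aeval_eq_zero_coeff_notMem (p := P.under O)
    (Algebra.IsAlgebraic.isAlgebraic (R := O) x) (Ideal.IsPrime.ne_top inferInstance)
  refine isInteger_or_isInteger_inv_of_aeval_eq_zero
    (f := f.map (algebraMap O (Localization.AtPrime P))) ?_ ⟨i, ?_⟩
  · have : IsScalarTower O (Localization.AtPrime P) K := .to₁₃₄ O A _ K
    rw [aeval_map_algebraMap, hfx]
  · rw [coeff_map, IsScalarTower.algebraMap_apply O A]
    exact IsLocalization.map_units _ (⟨_, hi⟩ : P.primeCompl)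

lemma flat_of_isIntegral_of_isTorsionFree (O : Type*) {R : Type*} [CommRing O] [IsDomain O]
    [IsBezout O] [CommRing R] [IsDomain R] [IsIntegrallyClosed R] [Algebra O R] [FaithfulSMul O R]
    [Algebra.IsIntegral O R] {M : Type*} [AddCommGroup M] [Module R M] [Module.IsTorsionFree R M] :
    Module.Flat R M := by
  rw [Module.Flat.flat_iff_torsion_eq_bot_of_valuationRing_localization_isMaximal fun P _ =>
    valuationRing_localization_of_isIntegral O P]
  exact Submodule.isTorsionFree_iff_torsion_eq_bot.mp inferInstance

end ValuationRing

namespace IsRingOfIntegersOfGlobalField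

open Polynomial

variable {A B : Type*} [CommRing A] [CommRing B] [Algebra A B]

lemma isDomain (hA : IsRingOfIntegersOfGlobalField A) : IsDomain A := by
  obtain ⟨⟨_, _, e⟩⟩ | ⟨⟨_, _, _, e⟩⟩ := hA <;> exact e.toMulEquiv.isDomain _

lemma flat (hA : IsRingOfIntegersOfGlobalField A) {M : Type*} [AddCommGroup M] [Module A M]
    [Module.IsTorsionFree A M] : Module.Flat A M := by
  have := hA.isDomain
  obtain ⟨⟨K, _, e⟩⟩ | ⟨⟨Fq, K, _, e⟩⟩ := hA
  · have : IsIntegrallyClosed A := .of_equiv e.symm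
    have : CharZero A := charZero_of_injective_ringHom (f := e.symm.toRingHom) e.symm.injective
    have : Algebra.IsIntegral ℤ A :=
      .of_surjective (e.symm.toRingHom.toIntAlgHom) e.symm.surjective
    exact flat_of_isIntegral_of_isTorsionFree ℤ
  · have : IsIntegrallyClosed A := .of_equiv e.symm
    let := (e.symm.toRingHom.comp (algebraMap Fq[X] _)).toAlgebra
    have : FaithfulSMul Fq[X] A := (faithfulSMul_iff_algebraMap_injective _ _).mpr
      (e.symm.injective.comp (FunctionField.ringOfIntegers.algebraMap_injective Fq K))
    have := IsIntegralClosure.isIntegral_algebra Fq[X] K (A := FunctionField.ringOfIntegers Fq K)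
    have : Algebra.IsIntegral Fq[X] A :=
      .of_surjective { e.symm.toRingHom with commutes' := fun _ => rfl } e.symm.surjective
    exact flat_of_isIntegral_of_isTorsionFree Fq[X]

lemma faithfullyFlat (hA : IsRingOfIntegersOfGlobalField A) (hB : IsRingOfIntegersOfGlobalField B)
    (hinj : Function.Injective (algebraMap A B)) [Module.Finite A B] :
    Module.FaithfullyFlat A B := by
  have := hA.isDomain
  have := hB.isDomain
  have : FaithfulSMul A B := (faithfulSMul_iff_algebraMap_injective A B).mpr hinj
  have : Module.Flat A B := hA.flat
  infer_instance

end IsRingOfIntegersOfGlobalField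

section Invariants

open TensorProduct

section TensorDual

variable {A B M : Type*} [CommRing A] [AddCommGroup B] [Module A B]
  [AddCommGroup M] [Module A M]

lemma lid_rTensor_lTensor {N : Type*} [AddCommGroup N] [Module A N] (φ : Module.Dual A B)
    (f : M →ₗ[A] N) (v : B ⊗[A] M) :
    TensorProduct.lid A N (φ.rTensor N (f.lTensor B v)) =
      f (TensorProduct.lid A M (φ.rTensor M v)) := by
  induction v with
  | zero => simp
  | tmul b m => simp
  | add v w hv hw => simp only [map_add, hv, hw]

variable [Module.Projective A B]

lemma tensor_eq_zero_of_forall_dual_rTensor_eq_zero {v : B ⊗[A] M}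
    (hv : ∀ φ : Module.Dual A B, φ.rTensor M v = 0) : v = 0 := by
  classical
  obtain ⟨s, hs⟩ := Module.projective_def'.mp ‹Module.Projective A B›
  have section_eq_zero : s.rTensor M v = 0 := by
    apply (TensorProduct.finsuppScalarLeft A M B).injective
    ext b
    rw [TensorProduct.finsuppScalarLeft_apply, ← LinearMap.rTensor_comp_apply, hv]
    simp
  rw [← LinearMap.rTensor_id_apply M B v, ← hs, LinearMap.rTensor_comp_apply, section_eq_zero,
    map_zero]

lemma mem_range_lTensor_subtype_of_forall_dual {N : Submodule A M} {v : B ⊗[A] M}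
    (hv : ∀ φ : Module.Dual A B, TensorProduct.lid A M (φ.rTensor M v) ∈ N) :
    v ∈ LinearMap.range (N.subtype.lTensor B) := by
  have exact_mkQ : Function.Exact (N.subtype.lTensor B) (N.mkQ.lTensor B) :=
    lTensor_exact B (LinearMap.exact_subtype_mkQ N) N.mkQ_surjective
  refine (exact_mkQ v).mp (tensor_eq_zero_of_forall_dual_rTensor_eq_zero fun φ => ?_)
  apply (TensorProduct.lid A (M ⧸ N)).injective
  rw [lid_rTensor_lTensor, map_zero]
  exact (Submodule.Quotient.mk_eq_zero N).mpr (hv φ)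

end TensorDual

variable {A : Type*} [CommRing A] {n : ℕ}

/-- The linear substitution by which a matrix `g` acts on the polynomial ring in `glInvariants`. -/
noncomputable def linearSubst (g : Matrix (Fin n) (Fin n) A) :
    MvPolynomial (Fin n) A →ₐ[A] MvPolynomial (Fin n) A :=
  MvPolynomial.aeval fun i => ∑ j, g i j • MvPolynomial.X j

lemma mem_glInvariants {G : Subgroup (Matrix.GeneralLinearGroup (Fin n) A)}
    {f : MvPolynomial (Fin n) A} :
    f ∈ glInvariants G ↔ ∀ g ∈ G, linearSubst (g : Matrix (Fin n) (Fin n) A) f = f :=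
  Iff.rfl

variable (B : Type*) [CommRing B] [Algebra A B]

lemma algebraTensorAlgEquiv_lTensor_linearSubst (g : Matrix (Fin n) (Fin n) A)
    (u : B ⊗[A] MvPolynomial (Fin n) A) :
    MvPolynomial.algebraTensorAlgEquiv A B ((linearSubst g).toLinearMap.lTensor B u) =
      linearSubst (g.map (algebraMap A B)) (MvPolynomial.algebraTensorAlgEquiv A B u) := by
  have intertwine : (MvPolynomial.algebraTensorAlgEquiv (σ := Fin n) A B).toAlgHom.comp
      (Algebra.TensorProduct.map (AlgHom.id B B) (linearSubst g)) =
      (linearSubst (g.map (algebraMap A B))).comp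
        (MvPolynomial.algebraTensorAlgEquiv (σ := Fin n) A B).toAlgHom := by
    ext i
    simp [linearSubst, TensorProduct.tmul_sum, Algebra.smul_def]
  exact DFunLike.congr_fun intertwine u

variable (G : Subgroup (Matrix.GeneralLinearGroup (Fin n) A))

lemma algebraTensorAlgEquiv_mem_glInvariants_map_iff {u : B ⊗[A] MvPolynomial (Fin n) A} :
    MvPolynomial.algebraTensorAlgEquiv A B u ∈
        glInvariants (G.map (Matrix.GeneralLinearGroup.map (algebraMap A B))) ↔
      ∀ g ∈ G, (linearSubst (g : Matrix (Fin n) (Fin n) A)).toLinearMap.lTensor B u = u := by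
  simp only [mem_glInvariants, Subgroup.mem_map, forall_exists_index, and_imp,
    forall_apply_eq_imp_iff₂]
  refine forall₂_congr fun g _ => ?_
  rw [← (MvPolynomial.algebraTensorAlgEquiv (σ := Fin n) A B).injective.eq_iff,
    algebraTensorAlgEquiv_lTensor_linearSubst]
  rfl

/-- The base change map `B ⊗ A[X]^G → B[X]`, with image in the invariants of `G` over `B`. -/
noncomputable def invariantsBaseChange : B ⊗[A] glInvariants G →ₐ[B] MvPolynomial (Fin n) B :=
  (MvPolynomial.algebraTensorAlgEquiv A B).toAlgHom.comp
    (Algebra.TensorProduct.map (AlgHom.id B B) (glInvariants G).val)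

lemma invariantsBaseChange_injective [Module.Flat A B] :
    Function.Injective (invariantsBaseChange B G) :=
  (MvPolynomial.algebraTensorAlgEquiv A B).injective.comp
    (Module.Flat.lTensor_preserves_injective_linearMap (M := B)
      (glInvariants G).val.toLinearMap Subtype.val_injective)

lemma range_invariantsBaseChange [Module.Projective A B] :
    (invariantsBaseChange B G).range =
      glInvariants (G.map (Matrix.GeneralLinearGroup.map (algebraMap A B))) := by
  ext t
  obtain ⟨u, rfl⟩ := (MvPolynomial.algebraTensorAlgEquiv (σ := Fin n) A B).surjective t
  rw [algebraTensorAlgEquiv_mem_glInvariants_map_iff]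
  constructor
  · rintro ⟨w, hw⟩ g hg
    obtain rfl : (glInvariants G).val.toLinearMap.lTensor B w = u :=
      (MvPolynomial.algebraTensorAlgEquiv (σ := Fin n) A B).injective hw
    have fixed : (linearSubst (g : Matrix (Fin n) (Fin n) A)).toLinearMap ∘ₗ
        (glInvariants G).val.toLinearMap = (glInvariants G).val.toLinearMap :=
      LinearMap.ext fun f => f.2 g hg
    rw [← LinearMap.lTensor_comp_apply, fixed]
  · intro hu
    have mem_range : u ∈ LinearMap.range ((glInvariants G).toSubmodule.subtype.lTensor B) := by
      refine mem_range_lTensor_subtype_of_forall_dual fun φ g hg => ?_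
      nth_rw 2 [← hu g hg]
      exact (lid_rTensor_lTensor φ (linearSubst g.val).toLinearMap u).symm
    obtain ⟨w, hw⟩ := mem_range
    exact ⟨w, congrArg (MvPolynomial.algebraTensorAlgEquiv A B) hw⟩

/-- Base change of invariants along a projective algebra: `B ⊗ A[X]^G ≃ B[X]^G`. -/
noncomputable def invariantsBaseChangeEquiv [Module.Projective A B] : B ⊗[A] glInvariants G ≃ₐ[B]
    glInvariants (G.map (Matrix.GeneralLinearGroup.map (algebraMap A B))) :=
  (AlgEquiv.ofInjective _ (invariantsBaseChange_injective B G)).trans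
    (Subalgebra.equivOfEq _ _ (range_invariantsBaseChange B G))

lemma isNoetherianRing_of_glInvariants [IsNoetherianRing (glInvariants G)] : IsNoetherianRing A :=
  isNoetherianRing_of_surjective _ A
    ((MvPolynomial.constantCoeff (σ := Fin n)).comp (glInvariants G).val.toRingHom)
    fun a => ⟨algebraMap A _ a, MvPolynomial.constantCoeff_C _ a⟩

lemma isCohenMacaulayRing_glInvariants_iff_of_projective [Module.Finite A B]
    [Module.FaithfullyFlat A B] [Module.Projective A B] : IsCohenMacaulayRing (glInvariants G) ↔
      IsCohenMacaulayRing
        (glInvariants (G.map (Matrix.GeneralLinearGroup.map (algebraMap A B)))) := by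
  have toTensor : IsCohenMacaulayRing (glInvariants G) ↔
      IsCohenMacaulayRing (glInvariants G ⊗[A] B) :=
    isCohenMacaulayRing_iff_of_finite_of_faithfullyFlat _ _
  exact toTensor.trans <| isCohenMacaulayRing_iff_of_ringEquiv <|
    (Algebra.TensorProduct.comm A (glInvariants G) B).toRingEquiv.trans
      (invariantsBaseChangeEquiv B G).toRingEquiv

end Invariants

theorem invariants_cohenMacaulay_iff_baseChange_general (A B : Type*) [CommRing A] [CommRing B]
    [Algebra A B] [Module.Finite A B] [Module.FaithfullyFlat A B] (n : ℕ)
    (G : Subgroup (Matrix.GeneralLinearGroup (Fin n) A)) :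
    IsCohenMacaulayRing ↥(glInvariants G) ↔
      IsCohenMacaulayRing
        ↥(glInvariants (G.map (Matrix.GeneralLinearGroup.map (algebraMap A B)))) := by
  have projective (_ : IsNoetherianRing A) : Module.Projective A B :=
    have := Module.finitePresentation_of_finite A B
    Module.Flat.projective_of_finitePresentation
  constructor
  · intro h
    have := h.1
    have := projective (isNoetherianRing_of_glInvariants G)
    exact (isCohenMacaulayRing_glInvariants_iff_of_projective B G).mp h
  · intro h
    have := h.1
    have := isNoetherianRing_of_glInvariants
      (G.map (Matrix.GeneralLinearGroup.map (algebraMap A B)))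
    have := projective (isNoetherianRing_of_faithfullyFlat A B)
    exact (isCohenMacaulayRing_glInvariants_iff_of_projective B G).mpr h

/-- **Base change.** Let `A ⊆ B` be rings of integers of global fields with `B` a finitely
generated `A`-module. Let `G ⊆ GL_n(A)`, regarded also as a subgroup of `GL_n(B)`, act
linearly on `R = A[X_1, …, X_n]` and on `T = B[X_1, …, X_n]`. Then `R^G` is Cohen–Macaulay
if and only if `T^G` is Cohen–Macaulay. -/
theorem invariants_cohenMacaulay_iff_baseChange
    (A B : Type) [CommRing A] [CommRing B] [Algebra A B]
    (hA : IsRingOfIntegersOfGlobalField A) (hB : IsRingOfIntegersOfGlobalField B)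
    (hinj : Function.Injective (algebraMap A B)) [Module.Finite A B]
    (n : ℕ) (G : Subgroup (Matrix.GeneralLinearGroup (Fin n) A)) [Finite ↥G] :
    IsCohenMacaulayRing ↥(glInvariants G) ↔
      IsCohenMacaulayRing
        ↥(glInvariants (G.map (Matrix.GeneralLinearGroup.map (algebraMap A B)))) := by
  have := hA.faithfullyFlat hB hinj
  exact invariants_cohenMacaulay_iff_baseChange_general A B n G
end
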